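/- Let u, α ∈ (0,1) and define f_{u,α}(r) = u·r² − (1−α)·{(2/π)·[2E(r) − (1−r²)K(r)] − 1} for r ∈ (0,1). Then f_{u,α}(r) < 0 for all r ∈ (0,1) if and only if u ≤ (1−α)/4. -/

import Mathlib

open Real

/-- The complete elliptic integral of the first kind. -/
noncomputable def ellipticK (r : ℝ) : ℝ :=
  ∫ θ in (0 : ℝ)..(π / 2), (Real.sqrt (1 - r ^ 2 * sin θ ^ 2))⁻¹

/-- The complete elliptic integral of the second kind. -/
noncomputable def ellipticE (r : ℝ) : ℝ :=
  ∫ θ in (0 : ℝ)..(π / 2), Real.sqrt (1 - r ^ 2 * sin θ ^ 2)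

/-!
Write `Δ(θ) = √(1 - r² sin² θ)`. The integrand of `2E(r) - (1 - r²)K(r)` is `2Δ - (1 - r²)/Δ`, and
subtracting from it the derivative of `r² sin θ cos θ / (1 + Δ)`, which vanishes at both ends of
`[0, π/2]`, leaves `1 + r² cos² θ / (1 + Δ)`. Hence `(2/π)(2E(r) - (1 - r²)K(r)) - 1 = r² Q(r)` with
`Q(r) = (2/π) ∫ cos² θ / (1 + Δ)`, and the inequality in question reads `u < (1 - α) Q(r)`. Since
`Δ ≤ 1`, strictly for `r sin θ ≠ 0`, the continuous function `Q` satisfies `Q(r) > Q(0) = 1/4` for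
`r ≠ 0`, so `1/4` is its unattained infimum over `(0, 1)`.
-/

open Filter Topology

/-- Legendre's `Δ(θ) = √(1 - r² sin² θ)`, the integrand of `ellipticE`, with the modulus `r` as the
first argument; it is `0` where the radicand is negative, which can happen only for `|r| > 1`. -/
noncomputable def legendreDelta (r θ : ℝ) : ℝ :=
  √(1 - r ^ 2 * sin θ ^ 2)

section LegendreDelta

variable {r : ℝ}

lemma legendreDelta_zero_left (θ : ℝ) : legendreDelta 0 θ = 1 := by
  simp [legendreDelta]

lemma legendreDelta_nonneg (r θ : ℝ) : 0 ≤ legendreDelta r θ :=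
  sqrt_nonneg _

lemma one_sub_sq_mul_sin_sq_pos (hr : r ^ 2 < 1) (θ : ℝ) : 0 < 1 - r ^ 2 * sin θ ^ 2 :=
  sub_pos.2 <| (mul_le_of_le_one_right (sq_nonneg r) (sin_sq_le_one θ)).trans_lt hr

lemma legendreDelta_pos (hr : r ^ 2 < 1) (θ : ℝ) : 0 < legendreDelta r θ :=
  sqrt_pos.2 (one_sub_sq_mul_sin_sq_pos hr θ)

lemma legendreDelta_sq (hr : r ^ 2 < 1) (θ : ℝ) :
    legendreDelta r θ ^ 2 = 1 - r ^ 2 * sin θ ^ 2 :=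
  sq_sqrt (one_sub_sq_mul_sin_sq_pos hr θ).le

lemma legendreDelta_le_one (r θ : ℝ) : legendreDelta r θ ≤ 1 :=
  sqrt_le_one.2 <| sub_le_self _ (by positivity)

lemma legendreDelta_lt_one {θ : ℝ} (hr : r ≠ 0) (hθ : sin θ ≠ 0) : legendreDelta r θ < 1 := by
  rw [legendreDelta, sqrt_lt' one_pos, one_pow]
  exact sub_lt_self _ (by positivity)

@[fun_prop]
lemma continuous_legendreDelta {X : Type*} [TopologicalSpace X] {f g : X → ℝ}
    (hf : Continuous f) (hg : Continuous g) : Continuous fun x => legendreDelta (f x) (g x) := by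
  unfold legendreDelta
  fun_prop

lemma hasDerivAt_legendreDelta (hr : r ^ 2 < 1) (θ : ℝ) :
    HasDerivAt (legendreDelta r) (-(r ^ 2 * sin θ * cos θ) / legendreDelta r θ) θ := by
  have hrad : HasDerivAt (fun θ => 1 - r ^ 2 * sin θ ^ 2) (-(r ^ 2 * (2 * sin θ * cos θ))) θ := by
    simpa using (((hasDerivAt_sin θ).pow 2).const_mul (r ^ 2)).const_sub 1
  refine (hrad.sqrt (one_sub_sq_mul_sin_sq_pos hr θ).ne').congr_deriv ?_
  rw [← legendreDelta]
  field_simp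

lemma hasDerivAt_sin_mul_cos_div_one_add_legendreDelta (hr : r ^ 2 < 1) (θ : ℝ) :
    HasDerivAt (fun θ => sin θ * cos θ / (1 + legendreDelta r θ))
      ((cos θ ^ 2 / legendreDelta r θ - sin θ ^ 2) / (1 + legendreDelta r θ)) θ := by
  have hΔ := legendreDelta_pos hr θ
  have hΔsq := legendreDelta_sq hr θ
  refine (((hasDerivAt_sin θ).mul (hasDerivAt_cos θ)).div
    ((hasDerivAt_legendreDelta hr θ).const_add 1) (by positivity)).congr_deriv ?_
  simp only [Pi.mul_apply]
  field_simp
  linear_combination cos θ ^ 2 * hΔsq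

lemma two_mul_legendreDelta_sub_mul_inv (hr : r ^ 2 < 1) (θ : ℝ) :
    2 * legendreDelta r θ - (1 - r ^ 2) * (legendreDelta r θ)⁻¹ =
      1 + r ^ 2 * (cos θ ^ 2 / (1 + legendreDelta r θ)) +
        r ^ 2 * ((cos θ ^ 2 / legendreDelta r θ - sin θ ^ 2) / (1 + legendreDelta r θ)) := by
  have hΔ := legendreDelta_pos hr θ
  have hΔsq := legendreDelta_sq hr θ
  field_simp
  rw [cos_sq']
  linear_combination (1 + 2 * legendreDelta r θ) * hΔsq

end LegendreDelta

/-- The function `Q(r) = (2/π) ∫₀^{π/2} cos² θ / (1 + Δ(θ)) dθ`. For `0 < r < 1` it is the quotient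
of `(2/π)(2E(r) - (1 - r²)K(r)) - 1` by `r²`; the integral also gives its value at `r = 0`. -/
noncomputable def ellipticQuotient (r : ℝ) : ℝ :=
  2 / π * ∫ θ in (0 : ℝ)..(π / 2), cos θ ^ 2 / (1 + legendreDelta r θ)

@[fun_prop]
lemma continuous_cos_sq_div_one_add_legendreDelta {X : Type*} [TopologicalSpace X] {f g : X → ℝ}
    (hf : Continuous f) (hg : Continuous g) :
    Continuous fun x => cos (g x) ^ 2 / (1 + legendreDelta (f x) (g x)) :=
  Continuous.div (by fun_prop) (by fun_prop) fun _ =>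
    (add_pos_of_pos_of_nonneg one_pos (legendreDelta_nonneg _ _)).ne'

lemma continuous_ellipticQuotient : Continuous ellipticQuotient :=
  (intervalIntegral.continuous_parametric_intervalIntegral_of_continuous'
    (by fun_prop) 0 (π / 2)).const_mul _

lemma ellipticQuotient_zero : ellipticQuotient 0 = 1 / 4 := by
  simp only [ellipticQuotient, legendreDelta_zero_left, intervalIntegral.integral_div,
    integral_cos_sq, cos_pi_div_two, cos_zero, sin_zero]
  ring_nf
  field_simp

lemma one_div_four_lt_ellipticQuotient {r : ℝ} (hr : r ≠ 0) : 1 / 4 < ellipticQuotient r := by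
  rw [← ellipticQuotient_zero]
  refine mul_lt_mul_of_pos_left ?_ (by positivity)
  simp only [legendreDelta_zero_left]
  have hsin : 0 < sin (π / 4) := by rw [sin_pi_div_four]; positivity
  have hcos : 0 < cos (π / 4) := by rw [cos_pi_div_four]; positivity
  refine intervalIntegral.integral_lt_integral_of_continuousOn_of_le_of_exists_lt
    (by positivity) (by fun_prop) (Continuous.continuousOn (by fun_prop)) (fun θ _ => ?_)
    ⟨π / 4, ⟨by positivity, by linarith [pi_pos]⟩, ?_⟩
  · have := legendreDelta_nonneg r θ
    gcongr
    exact legendreDelta_le_one r θ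
  · have := legendreDelta_nonneg r (π / 4)
    gcongr
    exact legendreDelta_lt_one hr hsin.ne'

lemma integral_cos_sq_div_legendreDelta_sub_sin_sq_div_eq_zero {r : ℝ} (hr : r ^ 2 < 1) :
    ∫ θ in (0 : ℝ)..(π / 2),
      (cos θ ^ 2 / legendreDelta r θ - sin θ ^ 2) / (1 + legendreDelta r θ) = 0 := by
  have hΔ := legendreDelta_pos hr
  have hcont : Continuous fun θ =>
      (cos θ ^ 2 / legendreDelta r θ - sin θ ^ 2) / (1 + legendreDelta r θ) := by
    fun_prop (disch := intro θ; linarith [hΔ θ])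
  rw [intervalIntegral.integral_eq_sub_of_hasDerivAt
    (fun θ _ => hasDerivAt_sin_mul_cos_div_one_add_legendreDelta hr θ)
    (hcont.intervalIntegrable _ _)]
  simp

lemma two_mul_ellipticE_sub_mul_ellipticK {r : ℝ} (hr : r ^ 2 < 1) :
    2 * ellipticE r - (1 - r ^ 2) * ellipticK r = π / 2 * (1 + r ^ 2 * ellipticQuotient r) := by
  have hΔ : ∀ θ, legendreDelta r θ ≠ 0 := fun θ => (legendreDelta_pos hr θ).ne'
  have hΔ' : ∀ θ, 1 + legendreDelta r θ ≠ 0 := fun θ => by linarith [legendreDelta_pos hr θ]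
  calc 2 * ellipticE r - (1 - r ^ 2) * ellipticK r
    _ = ∫ θ in (0 : ℝ)..(π / 2),
          (2 * legendreDelta r θ - (1 - r ^ 2) * (legendreDelta r θ)⁻¹) := by
      rw [intervalIntegral.integral_sub (Continuous.intervalIntegrable (by fun_prop) _ _)
        (Continuous.intervalIntegrable (by fun_prop (disch := assumption)) _ _),
        intervalIntegral.integral_const_mul, intervalIntegral.integral_const_mul]
      rfl
    _ = ∫ θ in (0 : ℝ)..(π / 2), (1 + r ^ 2 * (cos θ ^ 2 / (1 + legendreDelta r θ)) +
          r ^ 2 * ((cos θ ^ 2 / legendreDelta r θ - sin θ ^ 2) / (1 + legendreDelta r θ))) := by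
      simp_rw [two_mul_legendreDelta_sub_mul_inv hr]
    _ = π / 2 + r ^ 2 * ∫ θ in (0 : ℝ)..(π / 2), cos θ ^ 2 / (1 + legendreDelta r θ) := by
      rw [intervalIntegral.integral_add (Continuous.intervalIntegrable (by fun_prop) _ _)
        (Continuous.intervalIntegrable (by fun_prop (disch := assumption)) _ _),
        intervalIntegral.integral_add (Continuous.intervalIntegrable (by fun_prop) _ _)
        (Continuous.intervalIntegrable (by fun_prop) _ _),
        intervalIntegral.integral_const_mul, intervalIntegral.integral_const_mul,
        integral_cos_sq_div_legendreDelta_sub_sin_sq_div_eq_zero hr]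
      simp
    _ = π / 2 * (1 + r ^ 2 * ellipticQuotient r) := by
      rw [ellipticQuotient]
      field_simp

lemma forall_lt_mul_ellipticQuotient_iff {u c : ℝ} (hc : 0 < c) :
    (∀ r ∈ Set.Ioo (0 : ℝ) 1, u < c * ellipticQuotient r) ↔ u ≤ c / 4 := by
  constructor
  · intro h
    have hlim : Tendsto (fun r => c * ellipticQuotient r) (𝓝[>] 0) (𝓝 (c / 4)) := by
      have := (continuous_ellipticQuotient.const_mul c).tendsto 0
      rw [ellipticQuotient_zero, mul_one_div] at this
      exact this.mono_left nhdsWithin_le_nhds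
    refine ge_of_tendsto hlim ?_
    filter_upwards [Ioo_mem_nhdsGT one_pos] with r hr using (h r hr).le
  · intro h r hr
    calc u ≤ c * (1 / 4) := by rwa [mul_one_div]
      _ < c * ellipticQuotient r := by
        gcongr
        exact one_div_four_lt_ellipticQuotient hr.1.ne'

theorem stmt4_general (u α : ℝ) (hα : α < 1) :
    (∀ r ∈ Set.Ioo (0 : ℝ) 1,
      u * r ^ 2 -
        (1 - α) * (2 / π * (2 * ellipticE r - (1 - r ^ 2) * ellipticK r) - 1) < 0) ↔
    u ≤ (1 - α) / 4 := by
  rw [← forall_lt_mul_ellipticQuotient_iff (sub_pos.2 hα)]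
  refine forall₂_congr fun r hr => ?_
  have hr_sq : r ^ 2 < 1 := pow_lt_one₀ hr.1.le hr.2 two_ne_zero
  have hr_sq_pos : 0 < r ^ 2 := pow_pos hr.1 2
  have hquot : 2 / π * (2 * ellipticE r - (1 - r ^ 2) * ellipticK r) - 1 =
      r ^ 2 * ellipticQuotient r := by
    rw [two_mul_ellipticE_sub_mul_ellipticK hr_sq]
    field_simp
    ring
  rw [hquot, sub_neg, mul_left_comm, mul_comm u, mul_lt_mul_iff_right₀ hr_sq_pos]

theorem stmt4 (u α : ℝ) (hu : u ∈ Set.Ioo (0 : ℝ) 1) (hα : α ∈ Set.Ioo (0 : ℝ) 1) :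
    (∀ r ∈ Set.Ioo (0 : ℝ) 1,
      u * r ^ 2 -
        (1 - α) * (2 / π * (2 * ellipticE r - (1 - r ^ 2) * ellipticK r) - 1) < 0) ↔
    u ≤ (1 - α) / 4 :=
  stmt4_general u α hα.2
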